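/- The tile F ⊂ K has nonempty interior and, moreover, F is the closure of its interior. -/

import Mathlib

/-- The diagonal embedding `φ : ℚ → K = ℝ × ℚ₂`, `φ(z) = (z, z)`. -/
noncomputable def phi (z : ℚ) : ℝ × ℚ_[2] := ((z : ℝ), (z : ℚ_[2]))

/-- The tile `F ⊂ K = ℝ × ℚ₂`: all points of the form
`(1/2)·∑_{i=1}^{∞} d_{-i}·φ(1)·(-3/2)^{-i}` with digits `d_{-i} ∈ {0,1,2}`, the series
converging in `K` since multiplication by `(-3/2)⁻¹` contracts both coordinates. -/
noncomputable def Ftile : Set (ℝ × ℚ_[2]) :=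
  {x : ℝ × ℚ_[2] | ∃ d : ℕ → ℕ, (∀ i, d i ≤ 2) ∧
    HasSum (fun i : ℕ => phi ((1 / 2 : ℚ) * (d i : ℚ) * (-3 / 2 : ℚ) ^ (-(i : ℤ) - 1))) x}

/-!
The tile is the attractor of the contractions `y ↦ δ + β * y`, where `β = φ(-2/3)` and `δ` runs
through the digits `φ(-k/3)`, `k = 0, 1, 2`.

*Nonempty interior.* The digits represent the cosets of the lattice `φ(ℤ)` in `φ(ℤ/3)`, which
contains `β φ(ℤ)`, and the strip `E = ℝ × ℤ₂` is equal to `φ(ℤ) + β E`. Hence, whenever the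
translates of a set `Q` by `φ(ℤ)` cover `E`, so do those of its image `⋃ δ, δ + β Q`. Iterating from
a bounded `Q`, the images approach the tile, whose translates by `φ(ℤ)` therefore cover `E` as well.
As there are only countably many translates, Baire's theorem applies.

*Closure of the interior.* Multiplication by the unit `β` is open, so each contraction maps the
interior of the tile into itself, and the orbit of any interior point accumulates at every point
of the tile.
-/

open Bornology Filter Topology
open scoped Pointwise

lemma sum_digits_add_pow_mul_mem {R : Type*} [Semiring R] {β : R} {D S : Set R}
    (hS : D + β • S ⊆ S) {δ : ℕ → R} (hδ : ∀ i, δ i ∈ D) (n : ℕ) {y : R} (hy : y ∈ S) :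
    ∑ i ∈ Finset.range n, β ^ i * δ i + β ^ n * y ∈ S := by
  induction n generalizing y with
  | zero => simpa using hy
  | succ n ih =>
    have hstep : δ n + β * y ∈ S := hS (Set.add_mem_add (hδ n) (Set.smul_mem_smul_set hy))
    rw [Finset.sum_range_succ, add_assoc, pow_succ, mul_assoc, ← mul_add]
    exact ih hstep

section TopologicalSemiring

variable {R : Type*} [Semiring R] [TopologicalSpace R]

/-- The self-affine tile with contraction ratio `β` and digit set `D`: the set of all sums
`∑ i, β ^ i * δ i` with digits `δ i ∈ D`. The exponents start at `0`, so that the tile `T` satisfies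
`T = D + β • T`. -/
def digitTile (β : R) (D : Set R) : Set R :=
  {x | ∃ δ : ℕ → R, (∀ i, δ i ∈ D) ∧ HasSum (fun i => β ^ i * δ i) x}

variable {β : R} {D S : Set R}

lemma digitTile.zero_mem (hD : 0 ∈ D) : 0 ∈ digitTile β D :=
  ⟨fun _ => 0, fun _ => hD, by simp only [mul_zero, hasSum_zero]⟩

lemma digitTile.add_smul_subset [IsTopologicalSemiring R] :
    D + β • digitTile β D ⊆ digitTile β D := by
  rintro _ ⟨d, hd, _, ⟨y, ⟨δ, hδ, hy⟩, rfl⟩, rfl⟩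
  refine ⟨fun i => Nat.casesOn i d δ, fun i => by cases i <;> simp [hd, hδ], ?_⟩
  have hshift : HasSum (fun i => β ^ (i + 1) * δ i) (β * y) := by
    simpa only [pow_succ', mul_assoc] using hy.mul_left β
  convert HasSum.zero_add (f := fun i => β ^ i * (Nat.casesOn i d δ : R)) hshift using 1
  simp

theorem digitTile.subset_closure_of_add_smul_subset [IsTopologicalSemiring R]
    (hβ : IsTopologicallyNilpotent β) (hS : D + β • S ⊆ S) (hne : S.Nonempty) :
    digitTile β D ⊆ closure S := by
  rintro x ⟨δ, hδ, hx⟩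
  obtain ⟨p, hp⟩ := hne
  have hlim : Tendsto (fun n => ∑ i ∈ Finset.range n, β ^ i * δ i + β ^ n * p) atTop (𝓝 x) := by
    simpa only [zero_mul, add_zero] using hx.tendsto_sum_nat.add (hβ.mul_const p)
  exact mem_closure_of_tendsto hlim
    (Eventually.of_forall fun n => sum_digits_add_pow_mul_mem hS hδ n hp)

end TopologicalSemiring

theorem digitTile.subset_closure_interior {R : Type*} [Ring R] [TopologicalSpace R]
    [IsTopologicalRing R] {β : R} {D : Set R} (hβ : IsTopologicallyNilpotent β)
    (hunit : IsUnit β) (hne : (interior (digitTile β D)).Nonempty) :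
    digitTile β D ⊆ closure (interior (digitTile β D)) := by
  refine digitTile.subset_closure_of_add_smul_subset hβ ?_ hne
  obtain ⟨u, rfl⟩ := hunit
  set T := digitTile (u : R) D
  calc D + u • interior T = D + interior (u • T) := by rw [interior_smul]
    _ ⊆ interior (D + u • T) := subset_interior_add_right
    _ ⊆ interior T := interior_mono digitTile.add_smul_subset

lemma norm_pow_mul_le {R : Type*} [SeminormedRing R] (a b : R) (n : ℕ) :
    ‖a ^ n * b‖ ≤ ‖a‖ ^ n * ‖b‖ := by
  induction n with
  | zero => simp
  | succ n ih =>
    rw [pow_succ', pow_succ', mul_assoc, mul_assoc]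
    exact (norm_mul_le _ _).trans (by gcongr)

theorem digitTile.isCompact {R : Type*} [NormedRing R] [CompleteSpace R] {β : R}
    {D : Set R} (hβ : ‖β‖ < 1) (hD : IsCompact D) : IsCompact (digitTile β D) := by
  obtain ⟨C, hC⟩ := hD.isBounded.exists_norm_le
  have hbound (i : ℕ) (δ : ℕ → R) (hδ : δ ∈ Set.univ.pi fun _ => D) :
      ‖β ^ i * δ i‖ ≤ ‖β‖ ^ i * C :=
    (norm_pow_mul_le β (δ i) i).trans (by gcongr; exact hC _ (hδ i trivial))
  have hsum : Summable fun i => ‖β‖ ^ i * C :=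
    (summable_geometric_of_lt_one (norm_nonneg β) hβ).mul_right C
  have himage : digitTile β D =
      (fun δ : ℕ → R => ∑' i, β ^ i * δ i) '' Set.univ.pi fun _ => D := by
    refine Set.Subset.antisymm ?_ ?_
    · rintro x ⟨δ, hδ, hx⟩
      exact ⟨δ, fun i _ => hδ i, hx.tsum_eq⟩
    · rintro _ ⟨δ, hδ, rfl⟩
      exact ⟨δ, fun i => hδ i trivial,
        (Summable.of_norm_bounded hsum fun i => hbound i δ hδ).hasSum⟩
  rw [himage]
  exact (isCompact_univ_pi fun _ => hD).image_of_continuousOn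
    (continuousOn_tsum (fun i => by fun_prop) hsum hbound)

lemma subset_closure_of_subset_add_pow_smul {R : Type*} [SeminormedRing R] {β : R} {A B U : Set R}
    (hβ : ‖β‖ < 1) (hB : IsBounded B) (hU : ∀ n : ℕ, U ⊆ A + β ^ n • B) : U ⊆ closure A := by
  intro x hx
  have hdecomp (n : ℕ) : ∃ a ∈ A, ∃ b ∈ B, a + β ^ n * b = x := by
    obtain ⟨a, ha, _, ⟨b, hb, rfl⟩, hab⟩ := hU n hx
    exact ⟨a, ha, b, hb, hab⟩
  choose a ha b hb hab using hdecomp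
  obtain ⟨C, hC⟩ := hB.exists_norm_le
  have hrem : Tendsto (fun n => β ^ n * b n) atTop (𝓝 0) :=
    (tendsto_pow_atTop_nhds_zero_of_norm_lt_one hβ).zero_mul_isBoundedUnder_le
      (isBoundedUnder_of ⟨C, fun n => hC _ (hb n)⟩)
  have hlim : Tendsto a atTop (𝓝 x) := by
    have ha_eq : a = fun n => x - β ^ n * b n := funext fun n => eq_sub_of_add_eq (hab n)
    rw [ha_eq]
    simpa only [sub_zero] using hrem.const_sub x
  exact mem_closure_of_tendsto hlim (Eventually.of_forall ha)

section Covering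

variable {R σ : Type*} {β : R} {D S U B : Set R} [SetLike σ R] {Γ : σ}

lemma subset_add_add_pow_smul [Semiring R] [AddSubmonoidClass σ R] (hS : D + β • S ⊆ S)
    (hΓ : β • (Γ : Set R) ⊆ Γ + D) (hU : U ⊆ Γ + β • U) (hB : U ⊆ Γ + S + B) (n : ℕ) :
    U ⊆ Γ + S + β ^ n • B := by
  induction n with
  | zero => simpa only [pow_zero, one_smul] using hB
  | succ n ih =>
    calc U ⊆ Γ + β • U := hU
      _ ⊆ Γ + β • (Γ + S + β ^ n • B) := by gcongr
      _ = Γ + (β • (Γ : Set R) + β • S + β ^ (n + 1) • B) := by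
        rw [smul_add, smul_add, smul_smul, pow_succ']
      _ ⊆ Γ + (Γ + D + β • S + β ^ (n + 1) • B) := by gcongr
      _ = Γ + Γ + (D + β • S) + β ^ (n + 1) • B := by simp only [add_assoc]
      _ ⊆ Γ + S + β ^ (n + 1) • B := by rw [coe_add_coe]; gcongr

theorem subset_add_of_subset_add_smul [SeminormedRing R] [AddSubmonoidClass σ R] (hβ : ‖β‖ < 1)
    (hΓ_closed : IsClosed (Γ : Set R)) (hS_compact : IsCompact S) (hB_bounded : IsBounded B)
    (hS : D + β • S ⊆ S) (hΓ : β • (Γ : Set R) ⊆ Γ + D) (hU : U ⊆ Γ + β • U)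
    (hB : U ⊆ Γ + S + B) : U ⊆ Γ + S := by
  rw [← (hΓ_closed.add_right_of_isCompact hS_compact).closure_eq]
  exact subset_closure_of_subset_add_pow_smul hβ hB_bounded (subset_add_add_pow_smul hS hΓ hU hB)

end Covering

theorem nonempty_interior_of_subset_countable_vadd {G X : Type*} [AddGroup G] [TopologicalSpace X]
    [AddAction G X] [ContinuousConstVAdd G X] [BaireSpace X] {Γ : Set G} {S U : Set X}
    (hS : IsClosed S) (hΓ : Γ.Countable) (hU : (interior U).Nonempty) (hcover : U ⊆ Γ +ᵥ S) :
    (interior S).Nonempty := by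
  by_contra hempty
  rw [Set.not_nonempty_iff_eq_empty] at hempty
  have hmeagre : IsMeagre (⋃ g ∈ Γ, g +ᵥ S) := isMeagre_biUnion hΓ fun g _ =>
    ((hS.vadd g).isNowhereDense_iff.2 (by rw [interior_vadd, hempty, Set.vadd_set_empty])).isMeagre
  rw [Set.iUnion_vadd_set] at hmeagre
  exact not_isMeagre_of_isOpen isOpen_interior hU (hmeagre.mono (interior_subset.trans hcover))

/-- The digits of `Ftile` when it is written as a `digitTile` of ratio `φ(-2/3) = φ(-3/2)⁻¹`: the
factor `(1/2) · (-3/2)⁻¹ = -1/3` of the leading term is absorbed into them. -/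
noncomputable def tileDigits : Set (ℝ × ℚ_[2]) := (fun k : ℕ => phi (-k / 3)) '' Set.Iic 2

/-- The lattice `φ(ℤ)`, encoded as the integers of the ring `ℝ × ℚ₂`. -/
noncomputable def intLattice : AddSubgroup (ℝ × ℚ_[2]) := (Int.castAddHom _).range

/-- The strip `ℝ × ℤ₂`, in which `φ(ℤ)` is a cocompact lattice. -/
def padicIntStrip : Set (ℝ × ℚ_[2]) := Set.univ ×ˢ Metric.closedBall 0 1

lemma phi_eq_algebraMap : phi = algebraMap ℚ (ℝ × ℚ_[2]) := rfl

lemma phi_intCast (n : ℤ) : phi n = n := by rw [phi_eq_algebraMap, map_intCast]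

lemma isUnit_phi {z : ℚ} (hz : z ≠ 0) : IsUnit (phi z) :=
  phi_eq_algebraMap ▸ hz.isUnit.map (algebraMap ℚ (ℝ × ℚ_[2]))

lemma norm_phi_neg_two_thirds_lt_one : ‖phi (-2 / 3)‖ < 1 := by
  have h2 : ‖(2 : ℚ_[2])‖ < 1 := by exact_mod_cast Padic.norm_p_lt_one (p := 2)
  have h3 : ‖(3 : ℚ_[2])‖ = 1 :=
    (Padic.norm_natCast_eq_one_iff (p := 2) (n := 3)).2 (by norm_num)
  rw [phi, Prod.norm_def, max_lt_iff]
  refine ⟨by norm_num, ?_⟩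
  push_cast
  rwa [norm_div, norm_neg, h3, div_one]

lemma isCompact_tileDigits : IsCompact tileDigits :=
  ((Set.finite_Iic 2).image _).isCompact

lemma Ftile_eq_digitTile : Ftile = digitTile (phi (-2 / 3)) tileDigits := by
  have hterm (k i : ℕ) : phi ((1 / 2 : ℚ) * k * (-3 / 2 : ℚ) ^ (-(i : ℤ) - 1)) =
      phi (-2 / 3) ^ i * phi (-k / 3) := by
    have hpow : (-3 / 2 : ℚ) ^ (-(i : ℤ) - 1) = (-2 / 3) ^ i * (-2 / 3) := by
      rw [← neg_add', zpow_neg, ← inv_zpow, ← pow_succ, ← zpow_natCast]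
      norm_num
    rw [phi_eq_algebraMap, ← map_pow, ← map_mul, hpow]
    congr 1
    ring
  ext x
  simp only [Ftile, hterm]
  constructor
  · rintro ⟨d, hd, hx⟩
    exact ⟨fun i => phi (-d i / 3), fun i => ⟨d i, hd i, rfl⟩, hx⟩
  · rintro ⟨δ, hδ, hx⟩
    choose d hd hdδ using hδ
    exact ⟨d, hd, by simpa only [hdδ] using hx⟩

lemma isCompact_Ftile : IsCompact Ftile :=
  Ftile_eq_digitTile ▸ digitTile.isCompact norm_phi_neg_two_thirds_lt_one isCompact_tileDigits

lemma zero_mem_Ftile : 0 ∈ Ftile :=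
  Ftile_eq_digitTile ▸ digitTile.zero_mem
    ⟨0, Nat.zero_le 2, by simp [phi_eq_algebraMap]⟩

lemma countable_intLattice : (intLattice : Set (ℝ × ℚ_[2])).Countable :=
  Set.countable_range _

lemma isClosed_intLattice : IsClosed (intLattice : Set (ℝ × ℚ_[2])) := by
  have hproper : IsProperMap (Int.cast : ℤ → ℝ × ℚ_[2]) :=
    isProperMap_of_comp_of_t2 continuous_of_discreteTopology continuous_fst
      Int.isClosedEmbedding_coe_real.isProperMap
  exact hproper.isClosedMap.isClosed_range

lemma smul_intLattice_subset :
    phi (-2 / 3) • (intLattice : Set (ℝ × ℚ_[2])) ⊆ intLattice + tileDigits := by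
  rintro _ ⟨_, ⟨n, rfl⟩, rfl⟩
  obtain ⟨k, hk⟩ := Int.eq_ofNat_of_zero_le (Int.emod_nonneg (2 * n) three_ne_zero)
  have hk2 : k ≤ 2 := by omega
  have hdivmod : (3 * (2 * n / 3 : ℤ) + k : ℚ) = 2 * n := by
    rw [← Int.cast_natCast k, ← hk]
    exact_mod_cast Int.mul_ediv_add_emod (2 * n) 3
  refine ⟨_, ⟨-(2 * n / 3), rfl⟩, _, ⟨k, hk2, rfl⟩, ?_⟩
  simp only [Int.coe_castAddHom, smul_eq_mul]
  rw [← phi_intCast, ← phi_intCast, phi_eq_algebraMap, ← map_add, ← map_mul]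
  congr 1
  push_cast
  linarith

lemma exists_eq_natCast_add_prime_mul {p : ℕ} [Fact p.Prime] (y : ℤ_[p]) :
    ∃ (m : ℕ) (z : ℤ_[p]), y = m + p * z := by
  obtain ⟨m, -, hm⟩ := PadicInt.exists_mem_range y
  rw [PadicInt.maximalIdeal_eq_span_p, Ideal.mem_span_singleton] at hm
  obtain ⟨z, hz⟩ := hm
  exact ⟨m, z, by rw [← hz, add_sub_cancel]⟩

lemma padicIntStrip_subset_add_smul :
    padicIntStrip ⊆ intLattice + phi (-2 / 3) • padicIntStrip := by
  rintro ⟨x, y⟩ ⟨-, hy⟩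
  rw [mem_closedBall_zero_iff] at hy
  obtain ⟨m, z, hmz⟩ := exists_eq_natCast_add_prime_mul (⟨y, hy⟩ : ℤ_[2])
  have hy_eq : y = m + 2 * z := by exact_mod_cast congrArg Subtype.val hmz
  have hz : ‖-3 * z.1‖ ≤ 1 := (-3 * z).norm_le_one
  refine ⟨_, ⟨m, rfl⟩, _, ⟨((x - m) * (-3 / 2), -3 * z),
    ⟨trivial, mem_closedBall_zero_iff.2 hz⟩, rfl⟩, ?_⟩
  ext
  · change ((m : ℤ) : ℝ) + ((-2 / 3 : ℚ) : ℝ) * ((x - m) * (-3 / 2)) = x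
    push_cast
    ring
  · change ((m : ℤ) : ℚ_[2]) + ((-2 / 3 : ℚ) : ℚ_[2]) * (-3 * z) = y
    rw [hy_eq]
    push_cast
    ring

lemma padicIntStrip_subset_add_closedBall :
    padicIntStrip ⊆ (intLattice : Set (ℝ × ℚ_[2])) + Metric.closedBall 0 1 := by
  rintro ⟨x, y⟩ ⟨-, hy⟩
  rw [mem_closedBall_zero_iff] at hy
  refine ⟨_, ⟨⌊x⌋, rfl⟩, (Int.fract x, y - ⌊x⌋), ?_, ?_⟩
  · rw [mem_closedBall_zero_iff, Prod.norm_def, max_le_iff]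
    refine ⟨?_, (PadicInt.subring 2).sub_mem hy (Padic.norm_int_le_one _)⟩
    rw [Real.norm_of_nonneg (Int.fract_nonneg x)]
    exact (Int.fract_lt_one x).le
  · ext <;> simp

lemma padicIntStrip_subset_intLattice_add_Ftile : padicIntStrip ⊆ intLattice + Ftile := by
  refine subset_add_of_subset_add_smul norm_phi_neg_two_thirds_lt_one isClosed_intLattice
    isCompact_Ftile (Metric.isBounded_closedBall (x := 0) (r := 1)) ?_ smul_intLattice_subset
    padicIntStrip_subset_add_smul ?_
  · rw [Ftile_eq_digitTile]
    exact digitTile.add_smul_subset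
  · refine padicIntStrip_subset_add_closedBall.trans ?_
    gcongr
    exact Set.subset_add_left _ zero_mem_Ftile

theorem nonempty_interior_Ftile : (interior Ftile).Nonempty := by
  refine nonempty_interior_of_subset_countable_vadd isCompact_Ftile.isClosed countable_intLattice
    ?_ padicIntStrip_subset_intLattice_add_Ftile
  have hopen : IsOpen padicIntStrip :=
    isOpen_univ.prod (IsUltrametricDist.isOpen_closedBall 0 one_ne_zero)
  exact ⟨0, hopen.interior_eq.symm ▸ ⟨trivial, Metric.mem_closedBall_self zero_le_one⟩⟩

/-- The tile `F ⊂ K` has nonempty interior and, moreover, `F` is the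
closure of its interior. -/
theorem Ftile_closure_interior :
    (interior Ftile).Nonempty ∧ Ftile = closure (interior Ftile) := by
  have hint := nonempty_interior_Ftile
  refine ⟨hint, Set.Subset.antisymm ?_ (closure_minimal interior_subset isCompact_Ftile.isClosed)⟩
  rw [Ftile_eq_digitTile] at hint ⊢
  exact digitTile.subset_closure_interior
    (tendsto_pow_atTop_nhds_zero_of_norm_lt_one norm_phi_neg_two_thirds_lt_one)
    (isUnit_phi (by norm_num)) hint
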